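/- Let d ≥ 3 and n ≥ 1. There exists a polynomial p_n in d complex variables (c_1,…,c_{d−2},a,w) such that: (1) for every (c,a) ∈ ℂ^{d−1} and every w ∈ ℂ with w ≠ 1, p_n(c,a,w) = 0 if and only if P_{c,a} has a cycle of exact period n and multiplier w, i.e. there exists z ∈ ℂ with P_{c,a}^{∘n}(z) = z, P_{c,a}^{∘m}(z) ≠ z for all 1 ≤ m < n, and (P_{c,a}^{∘n})'(z) = w; (2) for every (c,a) ∈ ℂ^{d−1}, p_n(c,a,1) = 0 if and only if there exists an integer q ≥ 1 dividing n and a primitive q-th root of unity η such that P_{c,a} has a cycle of exact period n/q and multiplier η. -/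

import Mathlib

open Filter Topology MeasureTheory

/-- Elementary symmetric polynomial of degree `m` in the values of `c`. -/
noncomputable def sigmaE {n : ℕ} (c : Fin n → ℂ) (m : ℕ) : ℂ :=
  (Multiset.map c Finset.univ.val).esymm m

/-- The polynomial `P_{c,a}`. -/
noncomputable def Pca (d : ℕ) (c : Fin (d - 2) → ℂ) (a : ℂ) (z : ℂ) : ℂ :=
  z ^ d / (d : ℂ) +
    (∑ j ∈ Finset.Icc 2 (d - 1), (-1 : ℂ) ^ (d - j) * sigmaE c (d - j) * z ^ j / (j : ℂ)) +
    a ^ d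

/-- The critical points `c₀ = 0, c₁, …, c_{d-2}` of `P_{c,a}`. -/
noncomputable def critPt {d : ℕ} (c : Fin (d - 2) → ℂ) (i : Fin (d - 1)) : ℂ :=
  if h : (i : ℕ) = 0 then 0 else c ⟨(i : ℕ) - 1, by have := i.isLt; omega⟩

/-- The orbit of `z` under `P_{c,a}` is bounded. -/
def boundedOrbit (d : ℕ) (c : Fin (d - 2) → ℂ) (a z : ℂ) : Prop :=
  Bornology.IsBounded (Set.range fun n => (Pca d c a)^[n] z)

/-- The Green function of `P_{c,a}`. -/
noncomputable def green (d : ℕ) (c : Fin (d - 2) → ℂ) (a z : ℂ) : ℝ :=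
  limUnder atTop (fun n : ℕ => Real.log (max 1 (‖(Pca d c a)^[n] z‖)) / (d : ℝ) ^ n)

/-- `G(c,a)`, the max of the Green function over the critical points. -/
noncomputable def Gmax (d : ℕ) (c : Fin (d - 2) → ℂ) (a : ℂ) : ℝ :=
  ⨆ i : Fin (d - 1), green d c a (critPt c i)

/-- The connectedness locus `C_d`. -/
def connLocus (d : ℕ) : Set ((Fin (d - 2) → ℂ) × ℂ) :=
  {p | ∀ i : Fin (d - 1), boundedOrbit d p.1 p.2 (critPt p.1 i)}

/-- The filled-in Julia set of `P_{c,a}`. -/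
def filledJulia (d : ℕ) (c : Fin (d - 2) → ℂ) (a : ℂ) : Set ℂ :=
  {z | boundedOrbit d c a z}

/-- `P_{c,a}` has a cycle of exact period `n` and multiplier `w`. -/
def HasExactCycle (d : ℕ) (c : Fin (d - 2) → ℂ) (a : ℂ) (n : ℕ) (w : ℂ) : Prop :=
  ∃ z : ℂ, (Pca d c a)^[n] z = z ∧ (∀ m : ℕ, 1 ≤ m → m < n → (Pca d c a)^[m] z ≠ z) ∧
    deriv ((Pca d c a)^[n]) z = w

/-- The assignment of the `d` variables `(c₁, …, c_{d-2}, a, w)`. -/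
noncomputable def varAssign (d : ℕ) (c : Fin (d - 2) → ℂ) (a w : ℂ) : Fin d → ℂ :=
  fun i => if h : (i : ℕ) < d - 2 then c ⟨(i : ℕ), h⟩ else if (i : ℕ) = d - 2 then a else w


open Polynomial in
/-- k-th iterate of a polynomial -/
noncomputable def itP {R : Type*} [CommRing R] (P : R[X]) (k : ℕ) : R[X] := (P.comp)^[k] X

section core
open Polynomial

variable {R : Type*} [CommRing R]

theorem itP_zero (P : R[X]) : itP P 0 = X := rfl

theorem itP_succ (P : R[X]) (k : ℕ) : itP P (k+1) = P.comp (itP P k) := by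
  simp [itP, Function.iterate_succ_apply']

theorem itP_one (P : R[X]) : itP P 1 = P := by simp [itP_succ, itP_zero]

theorem itP_add (P : R[X]) (a b : ℕ) : itP P (a + b) = (itP P a).comp (itP P b) := by
  induction a with
  | zero => simp [itP_zero]
  | succ a ih => rw [show a + 1 + b = (a + b) + 1 by ring, itP_succ, itP_succ, ih, comp_assoc]

theorem itP_mul (P : R[X]) (a b : ℕ) : itP P (a * b) = itP (itP P a) b := by
  induction b with
  | zero => simp [itP_zero]
  | succ b ih => rw [Nat.mul_succ, add_comm, itP_add, ih, itP_succ]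

theorem itP_eval (P : R[X]) (ev : R →+* ℂ) (z : ℂ) (k : ℕ) :
    (itP P k).eval₂ ev z = (fun x => P.eval₂ ev x)^[k] z := by
  induction k with
  | zero => simp [itP_zero]
  | succ k ih => rw [itP_succ, eval₂_comp, ih, Function.iterate_succ_apply']

theorem itP_map {S : Type*} [CommRing S] (P : R[X]) (ev : R →+* S) (k : ℕ) :
    (itP P k).map ev = itP (P.map ev) k := by
  induction k with
  | zero => simp [itP_zero]
  | succ k ih => rw [itP_succ, itP_succ, map_comp, ih]

theorem itP_quot (G : R[X]) (r : ℕ) : ∃ S T : R[X], itP G r - X = (G - X) * S ∧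
    S = ∑ j ∈ Finset.range r, (derivative G) ^ j + (G - X) * T := by
  induction r with
  | zero => exact ⟨0, 0, by simp [itP_zero]⟩
  | succ r ih =>
    obtain ⟨S, T, h1, h2⟩ := ih
    obtain ⟨k, hk⟩ := binomExpansion (G.map C) X ((G - X) * S)
    have e1 : ∀ (F q : R[X]), (F.map C).eval q = F.comp q := by
      intro F q; rw [eval_map, comp]
    rw [derivative_map, e1, e1, e1, comp_X, comp_X] at hk
    refine ⟨1 + derivative G * S + k * (G - X) * S ^ 2, derivative G * T + k * S ^ 2, ?_, ?_⟩
    · rw [itP_succ, eq_add_of_sub_eq' h1, hk]; ring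
    · rw [Finset.sum_range_succ']
      simp only [pow_succ', ← Finset.mul_sum]
      nth_rw 1 [h2]
      ring

/-- specialization at a periodic point -/
theorem itP_quot_eval (P : R[X]) (m r : ℕ) (S T : R[X])
    (h1 : itP P (m * r) - X = (itP P m - X) * S)
    (h2 : S = ∑ j ∈ Finset.range r, (derivative (itP P m)) ^ j + (itP P m - X) * T)
    (ev : R →+* ℂ) (z : ℂ) (hz : (fun x => P.eval₂ ev x)^[m] z = z) :
    S.eval₂ ev z = ∑ j ∈ Finset.range r, ((derivative (itP P m)).eval₂ ev z) ^ j ∧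
    (derivative (itP P (m * r))).eval₂ ev z = ((derivative (itP P m)).eval₂ ev z) ^ r := by
  have h0 : (itP P m - X).eval₂ ev z = 0 := by
    rw [eval₂_sub, itP_eval, hz, eval₂_X, sub_self]
  have hS : S.eval₂ ev z = ∑ j ∈ Finset.range r, ((derivative (itP P m)).eval₂ ev z) ^ j := by
    rw [h2, eval₂_add, eval₂_mul, h0, eval₂_finsetSum]
    simp [eval₂_pow]
  refine ⟨hS, ?_⟩
  have h3 := congrArg (fun F => (derivative F).eval₂ ev z) h1
  simp only [derivative_sub, derivative_mul, derivative_X, eval₂_add, eval₂_mul, h0, zero_mul,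
    add_zero] at h3
  rw [eval₂_sub, eval₂_sub, hS, eval₂_one, mul_geom_sum] at h3
  exact sub_left_inj.mp h3

theorem itP_quot' (P : R[X]) (m r : ℕ) : ∃ S : R[X], itP P (m * r) - X = (itP P m - X) * S ∧
    ∀ (ev : R →+* ℂ) (z : ℂ), (fun x => P.eval₂ ev x)^[m] z = z →
    S.eval₂ ev z = ∑ j ∈ Finset.range r, ((derivative (itP P m)).eval₂ ev z) ^ j := by
  obtain ⟨S, T, h1, h2⟩ := itP_quot (itP P m) r
  rw [← itP_mul] at h1
  exact ⟨S, h1, fun ev z hz => (itP_quot_eval P m r S T h1 h2 ev z hz).1⟩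

theorem itP_mult (P : R[X]) (m r : ℕ) (ev : R →+* ℂ) (z : ℂ)
    (hz : (fun x => P.eval₂ ev x)^[m] z = z) :
    (derivative (itP P (m * r))).eval₂ ev z = ((derivative (itP P m)).eval₂ ev z) ^ r := by
  obtain ⟨S, T, h1, h2⟩ := itP_quot (itP P m) r
  rw [← itP_mul] at h1
  exact (itP_quot_eval P m r S T h1 h2 ev z hz).2

theorem itP_lead [IsDomain R] (P : R[X]) (hdeg : 2 ≤ P.natDegree) (hlc : IsUnit P.leadingCoeff)
    (k : ℕ) : (itP P k).natDegree = P.natDegree ^ k ∧ IsUnit (itP P k).leadingCoeff := by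
  induction k with
  | zero => simp [itP_zero]
  | succ k ih =>
    have : (itP P k).natDegree ≠ 0 := by rw [ih.1]; positivity
    rw [itP_succ, natDegree_comp, leadingCoeff_comp this, ih.1, pow_succ']
    exact ⟨rfl, hlc.mul (ih.2.pow _)⟩

theorem itP_sub_lead [IsDomain R] (P : R[X]) (hdeg : 2 ≤ P.natDegree)
    (hlc : IsUnit P.leadingCoeff) (k : ℕ) (hk : 1 ≤ k) : IsUnit (itP P k - X).leadingCoeff := by
  obtain ⟨h1, h2⟩ := itP_lead P hdeg hlc k
  rw [leadingCoeff_sub_of_degree_lt]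
  · exact h2
  · apply degree_lt_degree
    rw [h1, natDegree_X]
    calc 1 < 2 ^ 1 := by norm_num
      _ ≤ P.natDegree ^ 1 := by simpa using hdeg
      _ ≤ _ := Nat.pow_le_pow_right (by omega) hk

theorem lead_of_dvd [IsDomain R] {f g : R[X]} (h : f ∣ g) (hg : IsUnit g.leadingCoeff) :
    IsUnit f.leadingCoeff := by
  obtain ⟨h, rfl⟩ := h
  rw [leadingCoeff_mul] at hg
  exact isUnit_of_mul_isUnit_left hg

theorem itP_special (e : ℂ) (d : ℕ) (k : ℕ) : ∃ b : ℂ, itP (C e * X ^ d) k = C b * X ^ (d ^ k) := by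
  induction k with
  | zero => exact ⟨1, by simp [itP_zero]⟩
  | succ k ih =>
    obtain ⟨b, hb⟩ := ih
    refine ⟨e * b ^ d, ?_⟩
    rw [itP_succ, hb]
    simp [mul_pow, pow_succ, pow_mul]
    ring

theorem sqfree [IsDomain R] (P : R[X]) (hdeg : 2 ≤ P.natDegree) (hlc : IsUnit P.leadingCoeff)
    (ev0 : R →+* ℂ) (e0 : ℂ) (d : ℕ) (hd : 2 ≤ d) (h0 : P.map ev0 = C e0 * X ^ d) (n : ℕ)
    (hn : 1 ≤ n) (π : R[X]) (hπ : Prime π) : ¬ π * π ∣ itP P n - X := by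
  intro h
  have hu := lead_of_dvd (dvd_of_mul_left_dvd h) (itP_sub_lead P hdeg hlc n hn)
  have hnd : (π.map ev0).natDegree = π.natDegree :=
    natDegree_map_of_leadingCoeff_ne_zero _ (hu.map ev0).ne_zero
  have hpos : π.natDegree ≠ 0 := by
    intro h0
    apply hπ.not_isUnit
    rw [eq_C_of_natDegree_eq_zero h0]
    rw [leadingCoeff, h0] at hu
    exact hu.map C
  obtain ⟨z, hz⟩ := IsAlgClosed.exists_root (π.map ev0)
    (fun h => hpos (by rw [← hnd]; exact natDegree_eq_of_degree_eq_some h))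
  obtain ⟨g, hg⟩ := h
  have hg' := congrArg (Polynomial.map ev0) hg
  obtain ⟨b, hb⟩ := itP_special e0 d n
  simp only [Polynomial.map_sub, Polynomial.map_mul, itP_map, h0, hb, map_X] at hg'
  have hz' : eval z (π.map ev0) = 0 := hz
  have a1 := congrArg (eval z) hg'
  have a2 := congrArg (fun F => eval z (derivative F)) hg'
  have hD : 2 ≤ d ^ n := hd.trans (Nat.le_self_pow (by omega) d)
  obtain ⟨D, hD'⟩ : ∃ D, d ^ n = D + 2 := ⟨d ^ n - 2, by omega⟩
  rw [hD'] at a1 a2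
  simp [hz', derivative_mul] at a1 a2
  have hz0 : z = 0 := by
    have hc : ((D : ℂ) + 1) ≠ 0 := by exact_mod_cast Nat.succ_ne_zero D
    have : ((D : ℂ) + 1) * z = 0 := by linear_combination z * a2 - ((D:ℂ)+2) * a1
    exact (mul_eq_zero.mp this).resolve_left hc
  subst hz0
  simp at a2

theorem core [IsDomain R] [UniqueFactorizationMonoid R] (P : R[X]) (hdeg : 2 ≤ P.natDegree)
    (hlc : IsUnit P.leadingCoeff)
    (ev0 : R →+* ℂ) (e0 : ℂ) (d : ℕ) (hd : 2 ≤ d) (h0 : P.map ev0 = C e0 * X ^ d) (n : ℕ)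
    (hn : 1 ≤ n) : ∃ Φ : R[X], IsUnit Φ.leadingCoeff ∧ ∀ (ev : R →+* ℂ) (z : ℂ),
      Φ.eval₂ ev z = 0 ↔ ∃ m q : ℕ, m * q = n ∧
        Function.minimalPeriod (fun x => P.eval₂ ev x) z = m ∧
        (q = 1 ∨ IsPrimitiveRoot ((derivative (itP P m)).eval₂ ev z) q) := by
  classical
  set F := itP P n - X with hF
  have hFu : IsUnit F.leadingCoeff := itP_sub_lead P hdeg hlc n hn
  have hF0 : F ≠ 0 := by
    intro h; rw [h] at hFu; simp at hFu
  let good : R[X] → Prop := fun π => ∀ k, k ∣ n → k < n → ¬ π ∣ itP P k - X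
  let Φ := ((UniqueFactorizationMonoid.factors F).filter good).prod
  have hΦF : Φ ∣ F := (Multiset.prod_dvd_prod_of_le (Multiset.filter_le _ _)).trans
    (UniqueFactorizationMonoid.factors_prod hF0).dvd
  -- roots of Φ
  have hroot : ∀ (ev : R →+* ℂ) (z : ℂ), Φ.eval₂ ev z = 0 ↔
      ∃ π : R[X], Prime π ∧ π ∣ F ∧ good π ∧ π.eval₂ ev z = 0 := by
    intro ev z
    have : Φ.eval₂ ev z = 0 ↔ (0:ℂ) ∈ ((UniqueFactorizationMonoid.factors F).filter good).map
        (eval₂RingHom ev z) := by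
      rw [← Multiset.prod_eq_zero_iff, ← map_multiset_prod]; rfl
    rw [this, Multiset.mem_map]
    constructor
    · rintro ⟨π, hπ, hz⟩
      rw [Multiset.mem_filter] at hπ
      exact ⟨π, UniqueFactorizationMonoid.prime_of_factor _ hπ.1,
        UniqueFactorizationMonoid.dvd_of_mem_factors hπ.1, hπ.2, hz⟩
    · rintro ⟨π, hπ, hd, hg, hz⟩
      obtain ⟨π', h1, h2⟩ := UniqueFactorizationMonoid.exists_mem_factors_of_dvd hF0 hπ.irreducible hd
      refine ⟨π', Multiset.mem_filter.mpr ⟨h1, fun k hk hk' h => hg k hk hk' (h2.dvd.trans h)⟩, ?_⟩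
      obtain ⟨u, rfl⟩ := h2
      rw [map_mul]
      change π.eval₂ ev z * _ = 0
      rw [hz, zero_mul]
  have hfac : ∀ (f : R[X]), f ∣ F → ∀ (ev : R →+* ℂ) (z : ℂ), f.eval₂ ev z = 0 →
      ∃ π : R[X], Prime π ∧ π ∣ f ∧ π.eval₂ ev z = 0 := by
    intro f hf ev z hz
    have hf0 : f ≠ 0 := ne_zero_of_dvd_ne_zero hF0 hf
    obtain ⟨u, hu⟩ := (UniqueFactorizationMonoid.factors_prod hf0).symm
    have : (0:ℂ) ∈ (UniqueFactorizationMonoid.factors f).map (eval₂RingHom ev z) := by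
      rw [← Multiset.prod_eq_zero_iff, ← map_multiset_prod, ← hu, map_mul]
      change f.eval₂ ev z * _ = 0
      rw [hz, zero_mul]
    obtain ⟨π, hπ, hz⟩ := Multiset.mem_map.mp this
    exact ⟨π, UniqueFactorizationMonoid.prime_of_factor _ hπ,
        UniqueFactorizationMonoid.dvd_of_mem_factors hπ, hz⟩
  have hper : ∀ (ev : R →+* ℂ) (z : ℂ) (k : ℕ), (itP P k - X).eval₂ ev z = 0 ↔
      (fun x => P.eval₂ ev x)^[k] z = z := by
    intro ev z k
    rw [eval₂_sub, itP_eval, eval₂_X, sub_eq_zero]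
  have hdz : ∀ (ev : R →+* ℂ) (z : ℂ) (f g : R[X]), f ∣ g → f.eval₂ ev z = 0 →
      g.eval₂ ev z = 0 := by
    rintro ev z f _ ⟨g, rfl⟩ h
    rw [eval₂_mul, h, zero_mul]
  refine ⟨Φ, lead_of_dvd hΦF hFu, fun ev z => ?_⟩
  rw [hroot]
  constructor
  · rintro ⟨π, hπ, hd, hg, hz⟩
    have hpn := (hper ev z n).mp (hdz _ _ _ _ hd hz)
    set f := fun x => P.eval₂ ev x with hf
    have hmn : Function.minimalPeriod f z ∣ n := Function.IsPeriodicPt.minimalPeriod_dvd hpn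
    set m := Function.minimalPeriod f z with hm
    obtain ⟨q, hq⟩ := hmn
    refine ⟨m, q, hq.symm, rfl, ?_⟩
    by_cases hq1 : q = 1
    · exact Or.inl hq1
    right
    have hmz : f^[m] z = z := Function.isPeriodicPt_minimalPeriod f z
    have hm0 : 0 < m := Nat.pos_of_ne_zero (by rintro h; rw [h] at hq; omega)
    have hq0 : 0 < q := Nat.pos_of_ne_zero (by rintro h; rw [h] at hq; omega)
    set l := (derivative (itP P m)).eval₂ ev z with hl
    -- quotient vanishing
    have hquot : ∀ k r, k * r = n → k < n → f^[k] z = z →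
        ∑ j ∈ Finset.range r, ((derivative (itP P k)).eval₂ ev z) ^ j = 0 := by
      intro k r hkr hkn hkz
      obtain ⟨S, hS1, hS2⟩ := itP_quot' P k r
      rw [← hS2 ev z hkz]
      rw [hkr] at hS1
      rw [hF, hS1] at hd
      exact hdz _ _ _ _ ((hπ.dvd_or_dvd hd).resolve_left (hg k ⟨r, hkr.symm⟩ hkn)) hz
    have hs := hquot m q hq.symm (by rw [hq]; nlinarith [show 2 ≤ q by omega]) hmz
    have hlq : l ^ q = 1 := by
      have := geom_sum_mul l q
      rw [hs, zero_mul] at this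
      exact (sub_eq_zero.mp this.symm)
    refine (IsPrimitiveRoot.iff_orderOf).mpr ?_
    have hdvd := orderOf_dvd_of_pow_eq_one hlq
    obtain ⟨t, ht⟩ := hdvd
    by_contra hne
    set r := orderOf l
    have hr0 : 0 < r := Nat.pos_of_ne_zero (by rintro h; rw [h] at ht; omega)
    have ht1 : t ≠ 1 := by rintro rfl; omega
    have ht0 : t ≠ 0 := by rintro rfl; omega
    have hk := hquot (m * r) t (by rw [hq, ht]; ring)
      (by rw [hq, ht]; have : r < r * t := by nlinarith [show 2 ≤ t by omega]
          exact Nat.mul_lt_mul_of_pos_left this hm0)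
      (Function.IsPeriodicPt.mul_const (show Function.IsPeriodicPt f m z from hmz) r)
    rw [itP_mult P m r ev z hmz, ← hl, pow_orderOf_eq_one] at hk
    simp at hk
    omega
  · rintro ⟨m, q, hq, hm, h⟩
    set f := fun x => P.eval₂ ev x with hf
    have hm0 : 0 < m := Nat.pos_of_ne_zero (by rintro h; rw [h] at hq; omega)
    have hmz : f^[m] z = z := by rw [← hm]; exact Function.isPeriodicPt_minimalPeriod f z
    have hdvd : ∀ k, f^[k] z = z → m ∣ k := by
      intro k hk; rw [← hm]; exact Function.IsPeriodicPt.minimalPeriod_dvd hk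
    by_cases hq1 : q = 1
    · subst hq1
      rw [mul_one] at hq
      subst hq
      obtain ⟨π, h1, h2, h3⟩ := hfac F dvd_rfl ev z ((hper ev z m).mpr hmz)
      refine ⟨π, h1, h2, fun k hk hkn hdv => ?_, h3⟩
      have := hdvd k ((hper ev z k).mp (hdz _ _ _ _ hdv h3))
      have hk0 : 0 < k := Nat.pos_of_dvd_of_pos hk hm0
      exact absurd (Nat.le_of_dvd hk0 this) (by omega)
    · have hprim := h.resolve_left hq1
      obtain ⟨S, hS1, hS2⟩ := itP_quot' P m q
      rw [hq] at hS1
      have hSF : S ∣ F := ⟨_, by rw [hF, hS1, mul_comm]⟩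
      have hq0 : 0 < q := Nat.pos_of_ne_zero (by rintro h; rw [h] at hq; omega)
      have hS0 : S.eval₂ ev z = 0 := by
        rw [hS2 ev z hmz]; exact hprim.geom_sum_eq_zero (by omega)
      obtain ⟨π, h1, h2, h3⟩ := hfac S hSF ev z hS0
      have hnm : ¬ π ∣ itP P m - X := by
        intro h4
        refine sqfree P hdeg hlc ev0 e0 d hd h0 n hn π h1 ?_
        rw [hS1]
        exact mul_dvd_mul h4 h2
      refine ⟨π, h1, h2.trans hSF, fun k hk hkn hdv => ?_, h3⟩
      obtain ⟨s, rfl⟩ := hdvd k ((hper ev z k).mp (hdz _ _ _ _ hdv h3))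
      obtain ⟨S', hS1', hS2'⟩ := itP_quot' P m s
      rw [hS1'] at hdv
      have := hdz _ _ _ _ ((h1.dvd_or_dvd hdv).resolve_left hnm) h3
      rw [hS2' ev z hmz] at this
      have h5 := geom_sum_mul ((derivative (itP P m)).eval₂ ev z) s
      rw [this, zero_mul] at h5
      have h6 := hprim.dvd_of_pow_eq_one s (sub_eq_zero.mp h5.symm)
      rw [← hq] at hkn
      have hs0 : s ≠ 0 := by
        rintro rfl
        rw [mul_zero, zero_dvd_iff] at hk
        omega
      have := Nat.le_of_dvd (Nat.pos_of_ne_zero hs0) h6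
      have := Nat.lt_of_mul_lt_mul_left hkn
      omega

end core

section final
open Polynomial

theorem res_lemma {R : Type*} [CommRing R] (Φ G : R[X]) (ev : R →+* ℂ)
    (hΦ : IsUnit Φ.leadingCoeff) :
    ev (Φ.resultant G) = 0 ↔ ∃ z, Φ.eval₂ ev z = 0 ∧ G.eval₂ ev z = 0 := by
  have hne : ev Φ.leadingCoeff ≠ 0 := (hΦ.map ev).ne_zero
  have hnd : (Φ.map ev).natDegree = Φ.natDegree := natDegree_map_of_leadingCoeff_ne_zero _ hne
  have h0 : Φ.map ev ≠ 0 := by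
    intro h
    apply hne
    rw [leadingCoeff, ← coeff_map, h, coeff_zero]
  rw [← resultant_map_map, ← hnd, resultant_eq_prod_eval _ _ _ natDegree_map_le
    (IsAlgClosed.splits _)]
  rw [mul_eq_zero, or_iff_right (pow_ne_zero _ (leadingCoeff_ne_zero.mpr h0)),
    Multiset.prod_eq_zero_iff, Multiset.mem_map]
  simp only [mem_roots h0, IsRoot, eval_map]

/-- generic elementary symmetric polynomial -/
noncomputable def egen (d : ℕ) (m : ℕ) : MvPolynomial (Fin d) ℂ :=
  ∑ t ∈ Finset.powersetCard m (Finset.univ : Finset (Fin (d - 2))),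
    ∏ i ∈ t, MvPolynomial.X ⟨i, by omega⟩

theorem egen_eval (d : ℕ) (c : Fin (d - 2) → ℂ) (a w : ℂ) (m : ℕ) :
    MvPolynomial.eval (varAssign d c a w) (egen d m) = sigmaE c m := by
  rw [sigmaE, Finset.esymm_map_val, egen]
  simp [map_sum, map_prod, varAssign]

theorem egen_zero (d : ℕ) (m : ℕ) (hm : m ≠ 0) :
    MvPolynomial.eval (0 : Fin d → ℂ) (egen d m) = 0 := by
  rw [egen, map_sum]
  refine Finset.sum_eq_zero fun t ht => ?_
  rw [Finset.mem_powersetCard] at ht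
  simp [map_prod, ht.2, hm]

/-- lower order terms -/
noncomputable def Plow (d : ℕ) (hd : 3 ≤ d) : (MvPolynomial (Fin d) ℂ)[X] :=
  (∑ j ∈ Finset.Icc 2 (d - 1),
    C ((-1) ^ (d - j) * egen d (d - j) * MvPolynomial.C (1 / (j : ℂ))) * X ^ j) +
    C (MvPolynomial.X ⟨d - 2, by omega⟩ ^ d)

/-- the generic polynomial -/
noncomputable def Pgen (d : ℕ) (hd : 3 ≤ d) : (MvPolynomial (Fin d) ℂ)[X] :=
  C (MvPolynomial.C (1 / (d : ℂ))) * X ^ d + Plow d hd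

theorem Plow_deg (d : ℕ) (hd : 3 ≤ d) : (Plow d hd).degree < d := by
  rw [← mem_degreeLT]
  refine add_mem (sum_mem fun j hj => ?_) ?_
  · rw [mem_degreeLT]
    refine (degree_C_mul_X_pow_le _ _).trans_lt ?_
    rw [Finset.mem_Icc] at hj
    exact_mod_cast (by omega : j < d)
  · rw [mem_degreeLT]
    refine degree_C_le.trans_lt ?_
    exact_mod_cast (by omega : 0 < d)

theorem Pgen_lead (d : ℕ) (hd : 3 ≤ d) :
    (Pgen d hd).natDegree = d ∧ IsUnit (Pgen d hd).leadingCoeff := by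
  have hd0 : (1 / (d : ℂ)) ≠ 0 := by
    have : (d : ℂ) ≠ 0 := by exact_mod_cast (by omega : d ≠ 0)
    exact one_div_ne_zero this
  have hu : (MvPolynomial.C (1 / (d : ℂ)) : MvPolynomial (Fin d) ℂ) ≠ 0 := by
    simpa using hd0
  have h1 : (C (MvPolynomial.C (1 / (d : ℂ)) : MvPolynomial (Fin d) ℂ) * X ^ d).degree = (d : WithBot ℕ) :=
    degree_C_mul_X_pow _ hu
  have h2 := Plow_deg d hd
  rw [← h1] at h2
  constructor
  · rw [Pgen, natDegree_add_eq_left_of_degree_lt h2]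
    exact natDegree_C_mul_X_pow _ _ hu
  · rw [Pgen, leadingCoeff_add_of_degree_lt' h2, leadingCoeff_C_mul_X_pow]
    exact (IsUnit.mk0 _ hd0).map MvPolynomial.C

theorem Pgen_zero (d : ℕ) (hd : 3 ≤ d) :
    (Pgen d hd).map (MvPolynomial.eval 0) = C (1 / (d : ℂ)) * X ^ d := by
  have : (Plow d hd).map (MvPolynomial.eval 0) = 0 := by
    rw [Plow, Polynomial.map_add, Polynomial.map_sum, Finset.sum_eq_zero]
    · simp [show d ≠ 0 by omega]
    · intro j hj
      rw [Finset.mem_Icc] at hj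
      rw [Polynomial.map_mul, map_C, RingHom.map_mul, RingHom.map_mul, RingHom.map_mul,
        egen_zero d (d - j) (by omega)]
      simp
  rw [Pgen, Polynomial.map_add, this]
  simp

theorem varAssign_w (d : ℕ) (hd : 3 ≤ d) (c : Fin (d - 2) → ℂ) (a w : ℂ) (h : d - 1 < d) :
    varAssign d c a w ⟨d - 1, h⟩ = w := by
  rw [varAssign]
  simp only
  rw [dif_neg (by omega), if_neg (by omega)]

theorem Pgen_eval (d : ℕ) (hd : 3 ≤ d) (c : Fin (d - 2) → ℂ) (a w : ℂ) (z : ℂ) :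
    (Pgen d hd).eval₂ (MvPolynomial.eval (varAssign d c a w)) z = Pca d c a z := by
  have ha : varAssign d c a w ⟨d - 2, by omega⟩ = a := by
    simp [varAssign]
  rw [Pgen, Plow, Pca, eval₂_add, eval₂_add, eval₂_finsetSum, add_assoc]
  simp only [eval₂_mul, eval₂_C, eval₂_pow, eval₂_neg, eval₂_one, eval₂_X, map_mul, map_pow, map_neg, map_one,
    MvPolynomial.eval_C, MvPolynomial.eval_X, egen_eval, ha]
  congr 1
  · ring
  congr 1
  refine Finset.sum_congr rfl fun j _ => ?_
  ring

theorem hasExactCycle_iff (d : ℕ) (hd : 3 ≤ d) (c : Fin (d - 2) → ℂ) (a w : ℂ) (n : ℕ)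
    (hn : 1 ≤ n) (v : ℂ) : HasExactCycle d c a n v ↔
    ∃ z, Function.minimalPeriod
      (fun x => (Pgen d hd).eval₂ (MvPolynomial.eval (varAssign d c a w)) x) z = n ∧
      (derivative (itP (Pgen d hd) n)).eval₂ (MvPolynomial.eval (varAssign d c a w)) z = v := by
  have hf : (fun x => (Pgen d hd).eval₂ (MvPolynomial.eval (varAssign d c a w)) x) = Pca d c a :=
    funext (Pgen_eval d hd c a w)
  have hder : ∀ z, deriv ((Pca d c a)^[n]) z =
      (derivative (itP (Pgen d hd) n)).eval₂ (MvPolynomial.eval (varAssign d c a w)) z := by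
    intro z
    have : (Pca d c a)^[n] = fun z => eval z ((itP (Pgen d hd) n).map
        (MvPolynomial.eval (varAssign d c a w))) := by
      funext z
      rw [eval_map, itP_eval, hf]
    rw [this, Polynomial.deriv, derivative_map, eval_map]
  rw [hf]
  refine exists_congr fun z => ?_
  rw [hder, ← and_assoc]
  refine and_congr_left fun _ => ?_
  constructor
  · rintro ⟨h1, h2⟩
    have h1' : Function.IsPeriodicPt (Pca d c a) n z := h1
    by_contra hne
    have hle := h1'.minimalPeriod_le (by omega)
    exact h2 _ (h1'.minimalPeriod_pos (by omega)) (lt_of_le_of_ne hle hne)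
      (Function.isPeriodicPt_minimalPeriod _ z)
  · intro h
    refine ⟨?_, fun m hm hmn hz => ?_⟩
    · rw [← h]; exact Function.isPeriodicPt_minimalPeriod _ z
    · have hz' : Function.IsPeriodicPt (Pca d c a) m z := hz
      have := hz'.minimalPeriod_le (by omega)
      omega

end final

/-- Milnor–Silverman: existence of the polynomial `p_n` defining `Per_n(w)`. -/
theorem stmt5 (d n : ℕ) (hd : 3 ≤ d) (hn : 1 ≤ n) :
    ∃ p : MvPolynomial (Fin d) ℂ,
      (∀ (c : Fin (d - 2) → ℂ) (a w : ℂ), w ≠ 1 →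
        (MvPolynomial.eval (varAssign d c a w) p = 0 ↔ HasExactCycle d c a n w)) ∧
      (∀ (c : Fin (d - 2) → ℂ) (a : ℂ),
        (MvPolynomial.eval (varAssign d c a 1) p = 0 ↔
          ∃ q : ℕ, 1 ≤ q ∧ q ∣ n ∧ ∃ η : ℂ, η ^ q = 1 ∧
            (∀ m : ℕ, 1 ≤ m → m < q → η ^ m ≠ 1) ∧ HasExactCycle d c a (n / q) η)) := by
    classical
  let P := Pgen d hd
  obtain ⟨hdeg, hlc⟩ := Pgen_lead d hd
  obtain ⟨Φ, hΦ, hroot⟩ := core P (by rw [hdeg]; omega) hlc (MvPolynomial.eval 0) (1 / (d : ℂ)) d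
    (by omega) (Pgen_zero d hd) n hn
  refine ⟨Φ.resultant (Polynomial.C (MvPolynomial.X ⟨d - 1, by omega⟩) -
    Polynomial.derivative (itP P n)), ?_, ?_⟩
  · intro c a w hw
    rw [res_lemma _ _ _ hΦ, hasExactCycle_iff d hd c a w n hn]
    have hwv : varAssign d c a w ⟨d - 1, by omega⟩ = w := varAssign_w d hd c a w _
    constructor
    · rintro ⟨z, h1, h2⟩
      rw [hroot] at h1
      rw [Polynomial.eval₂_sub, Polynomial.eval₂_C, MvPolynomial.eval_X, hwv, sub_eq_zero] at h2
      obtain ⟨m, q, hq, hm, h⟩ := h1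
      by_cases hq1 : q = 1
      · subst hq1
        rw [mul_one] at hq
        subst hq
        exact ⟨z, hm, h2.symm⟩
      · exfalso
        have := itP_mult P m q (MvPolynomial.eval (varAssign d c a w)) z
          (by rw [← hm]; exact Function.isPeriodicPt_minimalPeriod _ z)
        rw [hq, ← h2, (h.resolve_left hq1).pow_eq_one] at this
        exact hw this
    · rintro ⟨z, h1, h2⟩
      refine ⟨z, (hroot _ _).mpr ⟨n, 1, mul_one n, h1, Or.inl rfl⟩, ?_⟩
      rw [Polynomial.eval₂_sub, Polynomial.eval₂_C, MvPolynomial.eval_X, hwv, sub_eq_zero]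
      exact h2.symm
  · intro c a
    rw [res_lemma _ _ _ hΦ]
    have hwv : varAssign d c a 1 ⟨d - 1, by omega⟩ = 1 := varAssign_w d hd c a 1 _
    constructor
    · rintro ⟨z, h1, h2⟩
      rw [hroot] at h1
      rw [Polynomial.eval₂_sub, Polynomial.eval₂_C, MvPolynomial.eval_X, hwv, sub_eq_zero] at h2
      obtain ⟨m, q, hq, hm, h⟩ := h1
      have hq0 : 0 < q := Nat.pos_of_ne_zero (by rintro rfl; omega)
      have hm0 : 0 < m := Nat.pos_of_ne_zero (by rintro h; rw [h] at hq; omega)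
      have hprim : IsPrimitiveRoot ((Polynomial.derivative (itP P m)).eval₂
          (MvPolynomial.eval (varAssign d c a 1)) z) q := by
        rcases h with rfl | h
        · rw [mul_one] at hq
          subst hq
          rw [← h2]
          exact IsPrimitiveRoot.one
        · exact h
      refine ⟨q, hq0, ⟨m, by rw [← hq, mul_comm]⟩, _, hprim.pow_eq_one, ?_, ?_⟩
      · intro k hk hkq
        exact hprim.pow_ne_one_of_pos_of_lt (by omega) hkq
      · rw [← hq, Nat.mul_div_cancel _ hq0, hasExactCycle_iff d hd c a 1 m hm0]
        exact ⟨z, hm, rfl⟩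
    · rintro ⟨q, hq0, ⟨m, hm⟩, η, h1, h2, h3⟩
      rw [hm, Nat.mul_div_cancel_left _ hq0] at h3
      have hm0 : 0 < m := Nat.pos_of_ne_zero (by rintro h; rw [h] at hm; omega)
      rw [hasExactCycle_iff d hd c a 1 m hm0] at h3
      obtain ⟨z, h3, h4⟩ := h3
      have hprim : IsPrimitiveRoot η q := by
        refine (IsPrimitiveRoot.iff hq0).mpr ⟨h1, fun l hl hl' => h2 l hl hl'⟩
      refine ⟨z, (hroot _ _).mpr ⟨m, q, by rw [hm, mul_comm], h3, Or.inr (by rw [h4]; exact hprim)⟩, ?_⟩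
      rw [Polynomial.eval₂_sub, Polynomial.eval₂_C, MvPolynomial.eval_X, hwv, sub_eq_zero]
      have := itP_mult P m q (MvPolynomial.eval (varAssign d c a 1)) z
          (by rw [← h3]; exact Function.isPeriodicPt_minimalPeriod _ z)
      rw [mul_comm, ← hm, h4, h1] at this
      exact this.symm
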